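/- For any real β > n and any β-concave probability density f on ℝ^n with finite sup-norm f_max, the differential entropy satisfies log(1/f_max) ≤ h(f) ≤ log(1/f_max) + Σ_{i=1}^n β/(β − i). -/

import Mathlib

/-!
Write `f = g ^ (-β)` with `g` convex, `m = inf g = fmax ^ (-1/β)` and `G = g / m ≥ 1`. Since
`-log f = log (1 / fmax) + β * log G`, the lower bound is `log G ≥ 0`, and the upper bound says
that the `f`-average of `log G` is at most `C = ∑_{i=1}^n 1/(β - i)`.

Only one consequence of convexity is used: contracting a sublevel set of `g` towards a
near-minimizer shows that `v t / (t - 1) ^ n` is nonincreasing, where `v t = vol {G < t}`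
(`superlevel_scaling`). Since
`G ^ (-β) * (C - log G) = β * ∫_G^∞ t ^ (-(β + 1)) * (c - log t) dt` with `c = C + 1 / β`, Fubini
reduces the claim to `0 ≤ ∫_1^∞ v t * t ^ (-(β + 1)) * (c - log t) dt`. For `v t = (t - 1) ^ n`
this integral is exactly zero, by repeated integration by parts (`weight_integral_eq_zero`). In
general Chebyshev's argument applies: `v t / (t - 1) ^ n` and `c - log t` are both nonincreasing,
so freezing the ratio at the zero `t = exp c` only decreases the integral (`entropy_core`). The
same growth bound on `v` gives integrability of `f log f`.
-/

open MeasureTheory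

/-- A function `f` on `ℝ^n` is β-concave (β > 0) if `f(x) = g(x)^{-β}` for some convex
function `g : ℝ^n → (0, ∞]`; the effective domain of `g` is encoded as a convex set `s` on
which a positive real-valued convex function `g` is given, with `f = 0` outside `s`. -/
def IsBetaConcave (n : ℕ) (β : ℝ) (f : (Fin n → ℝ) → ℝ) : Prop :=
  ∃ (s : Set (Fin n → ℝ)) (g : (Fin n → ℝ) → ℝ),
    ConvexOn ℝ s g ∧ (∀ x ∈ s, 0 < g x ∧ f x = g x ^ (-β)) ∧ ∀ x ∉ s, f x = 0

open Set Filter Topology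

/-! ### The extremal weight `(t - 1) ^ n * t ^ (-(b + 1)) * (c - log t)` -/

/-- Power bound for the extremal weight; `log t` costs an arbitrarily small power `t ^ δ`. -/
theorem weight_norm_le (n : ℕ) (b c δ t : ℝ) (hδ : 0 < δ) (ht : 1 < t) :
    ‖(t - 1) ^ n * t ^ (-b) * (c - Real.log t)‖ ≤
      |c| * t ^ ((n : ℝ) - b) + δ⁻¹ * t ^ ((n : ℝ) - b + δ) := by
  have ht0 : 0 < t := by linarith
  have hlog : |c - Real.log t| ≤ |c| + t ^ δ / δ := by
    refine (abs_sub _ _).trans ?_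
    rw [abs_of_nonneg (Real.log_nonneg ht.le)]
    gcongr
    exact Real.log_le_rpow_div ht0.le hδ
  have hpow : (t - 1) ^ n ≤ t ^ n := pow_le_pow_left₀ (by linarith) (by linarith) n
  have hn0 : 0 ≤ (t - 1) ^ n := pow_nonneg (by linarith) n
  rw [norm_mul, norm_mul, Real.norm_of_nonneg hn0,
    Real.norm_of_nonneg (Real.rpow_nonneg ht0.le _), Real.norm_eq_abs]
  calc (t - 1) ^ n * t ^ (-b) * |c - Real.log t|
      ≤ t ^ n * t ^ (-b) * (|c| + t ^ δ / δ) := by gcongr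
    _ = _ := by
      rw [Real.rpow_add ht0, sub_eq_add_neg, Real.rpow_add ht0, Real.rpow_natCast]
      field_simp

theorem weight_integrableOn (n : ℕ) (b c : ℝ) (hb : (n : ℝ) < b) :
    IntegrableOn (fun t : ℝ => (t - 1) ^ n * t ^ (-(b + 1)) * (c - Real.log t)) (Ioi 1) := by
  have hδ : 0 < (b - n) / 2 := by linarith
  have h1 := (integrableOn_Ioi_rpow_of_lt (a := (n : ℝ) - (b + 1)) (by linarith) one_pos).const_mul |c|
  have h2 := (integrableOn_Ioi_rpow_of_lt (a := (n : ℝ) - (b + 1) + (b - n) / 2) (by linarith)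
    one_pos).const_mul ((b - n) / 2)⁻¹
  refine Integrable.mono' (h1.add h2) ?_ ?_
  · refine Measurable.aestronglyMeasurable ?_
    fun_prop
  · filter_upwards [ae_restrict_mem measurableSet_Ioi] with t ht
    exact weight_norm_le n (b + 1) c _ t hδ ht

theorem weight_tendsto (n : ℕ) (b c : ℝ) (hb : (n : ℝ) < b) :
    Tendsto (fun t : ℝ => (t - 1) ^ n * t ^ (-b) * (c - Real.log t)) atTop (𝓝 0) := by
  have hδ : 0 < (b - n) / 2 := by linarith
  have h1 : Tendsto (fun t : ℝ => t ^ ((n : ℝ) - b)) atTop (𝓝 0) := by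
    have := tendsto_rpow_neg_atTop (y := b - n) (by linarith)
    simpa using this
  have h2 : Tendsto (fun t : ℝ => t ^ ((n : ℝ) - b + (b - n) / 2)) atTop (𝓝 0) := by
    have := tendsto_rpow_neg_atTop hδ
    refine this.congr fun t => ?_
    congr 1; ring
  refine squeeze_zero_norm' (a := fun t : ℝ => |c| * t ^ ((n : ℝ) - b) +
    ((b - n) / 2)⁻¹ * t ^ ((n : ℝ) - b + (b - n) / 2)) ?_ ?_
  · filter_upwards [eventually_gt_atTop 1] with t ht
    exact weight_norm_le n b c _ t hδ ht
  · simpa using (h1.const_mul |c|).add (h2.const_mul ((b - n) / 2)⁻¹)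

theorem hasDerivAt_rpow_log (b c t : ℝ) (hb : b ≠ 0) (ht : 0 < t) :
    HasDerivAt (fun t : ℝ => -(t ^ (-b) * (c - 1 / b - Real.log t)) / b)
      (t ^ (-(b + 1)) * (c - Real.log t)) t := by
  have h1 := Real.hasDerivAt_rpow_const (x := t) (p := -b) (Or.inl ht.ne')
  have h2 := (Real.hasDerivAt_log ht.ne').const_sub (c - 1 / b)
  refine ((h1.mul h2).neg.div_const b).congr_deriv ?_
  have e1 : t ^ (-b) = t ^ (-(b + 1)) * t := by
    rw [← Real.rpow_add_one ht.ne']; congr 1; ring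
  have e2 : -b - 1 = -(b + 1) := by ring
  rw [e2, e1]
  field_simp
  ring

/-- Tail integral that turns `a ^ (-b) * (c - 1 / b - log a)` into a superposition of the
indicators of `a < t`. -/
theorem integral_Ioi_rpow_log (b c a : ℝ) (hb : 0 < b) (ha : 1 ≤ a) :
    ∫ t in Ioi a, t ^ (-(b + 1)) * (c - Real.log t) = a ^ (-b) * (c - 1 / b - Real.log a) / b := by
  have hint : IntegrableOn (fun t : ℝ => t ^ (-(b + 1)) * (c - Real.log t)) (Ioi a) := by
    have := weight_integrableOn 0 b c (by simpa using hb)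
    simp only [pow_zero, one_mul] at this
    exact this.mono_set (Ioi_subset_Ioi ha)
  have hlim := weight_tendsto 0 b (c - 1 / b) (by simpa using hb)
  simp only [pow_zero, one_mul] at hlim
  rw [integral_Ioi_of_hasDerivAt_of_tendsto'
    (fun t ht => hasDerivAt_rpow_log b c t hb.ne' (by have : a ≤ t := ht; linarith)) hint
    (by simpa using hlim.neg.div_const b)]
  ring

/-- The average of `log t` against `(t - 1) ^ n * t ^ (-(b + 1))` on `(1, ∞)` is
`∑_{i=0}^n 1/(b - i)`. Integrating by parts lowers `(n, b)` to `(n - 1, b - 1)` and the constant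
by `1 / b`. -/
theorem weight_integral_eq_zero (n : ℕ) : ∀ b : ℝ, (n : ℝ) < b →
    ∫ t in Ioi (1 : ℝ), (t - 1) ^ n * t ^ (-(b + 1)) *
      (∑ i ∈ Finset.range (n + 1), 1 / (b - i) - Real.log t) = 0 := by
  induction n with
  | zero =>
    intro b hb
    have hb : 0 < b := by simpa using hb
    simp only [pow_zero, one_mul, integral_Ioi_rpow_log b _ 1 hb le_rfl]
    simp
  | succ n ih =>
    intro b hb
    push_cast at hb
    have hb0 : 0 < b := by have := n.cast_nonneg (α := ℝ); linarith
    set c := ∑ i ∈ Finset.range (n + 1 + 1), 1 / (b - (i : ℝ)) with hc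
    -- peeling off the term `i = 0` leaves the same sum for `(n, b - 1)`
    have hc' : c - 1 / b = ∑ i ∈ Finset.range (n + 1), 1 / (b - 1 - (i : ℝ)) := by
      rw [hc, Finset.sum_range_succ']
      simp only [Nat.cast_add, Nat.cast_one, Nat.cast_zero, sub_zero, add_sub_cancel_right]
      exact Finset.sum_congr rfl fun i _ => by ring
    have hih := ih (b - 1) (by linarith)
    rw [← hc'] at hih
    have hI1 := weight_integrableOn (n + 1) b c (by push_cast; linarith)
    have hI2 := weight_integrableOn n (b - 1) (c - 1 / b) (by linarith)
    have hlim := weight_tendsto (n + 1) b (c - 1 / b) (by push_cast; linarith)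
    have key := integral_Ioi_of_hasDerivAt_of_tendsto' (a := (1 : ℝ))
      (f := fun t : ℝ => (t - 1) ^ (n + 1) * (-(t ^ (-b) * (c - 1 / b - Real.log t)) / b))
      (f' := fun t : ℝ => (t - 1) ^ (n + 1) * t ^ (-(b + 1)) * (c - Real.log t) -
        ((n + 1) / b) * ((t - 1) ^ n * t ^ (-(b - 1 + 1)) * (c - 1 / b - Real.log t)))
      (m := 0) ?_ (hI1.sub (hI2.const_mul _)) ?_
    · rw [integral_sub hI1 (hI2.const_mul _), integral_const_mul, hih] at key
      simpa using key
    · intro t ht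
      have ht : 1 ≤ t := ht
      have h1 := ((hasDerivAt_id t).sub_const 1).pow (n + 1)
      refine (h1.mul (hasDerivAt_rpow_log b c t hb0.ne' (by linarith))).congr_deriv ?_
      simp only [id, Nat.add_sub_cancel, sub_add_cancel, Pi.pow_apply]
      push_cast
      ring
    · have := hlim.neg.div_const b
      simp only [neg_zero, zero_div] at this
      refine this.congr fun t => by ring

/-! ### The entropy inequality from the growth of sublevel sets -/

/-- Entropy inequality for a function `G ≥ 1` on a measure space, under the sole assumption that
`μ {G < t} / (t - 1) ^ n` is finite and nonincreasing in `t > 1`. By Fubini the integral is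
`b * ∫_1^∞ μ {G < t} * t ^ (-(b + 1)) * (c - log t) dt` with `c = ∑_{i=0}^n 1/(b - i)`, and
replacing the ratio by its value at `log t = c` decreases it to a multiple of the integral in
`weight_integral_eq_zero`. -/
theorem entropy_core {X : Type*} [MeasurableSpace X] (μ : Measure X) [SFinite μ] (n : ℕ) (b : ℝ)
    (hb : (n : ℝ) < b) (G : X → ℝ) (hG : Measurable G) (hG1 : ∀ᵐ x ∂μ, 1 ≤ G x)
    (hfin : ∀ t, 1 < t → μ {x | G x < t} < ⊤)
    (hscale : ∀ t₁ t₂, 1 < t₁ → t₁ ≤ t₂ →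
      μ.real {x | G x < t₂} * (t₁ - 1) ^ n ≤ μ.real {x | G x < t₁} * (t₂ - 1) ^ n) :
    Integrable (fun x => G x ^ (-b) * (∑ i ∈ Finset.Icc 1 n, 1 / (b - i) - Real.log (G x))) μ ∧
    0 ≤ ∫ x, G x ^ (-b) * (∑ i ∈ Finset.Icc 1 n, 1 / (b - i) - Real.log (G x)) ∂μ := by
  have hb0 : 0 < b := lt_of_le_of_lt n.cast_nonneg hb
  set c := ∑ i ∈ Finset.range (n + 1), 1 / (b - (i : ℝ)) with hc
  have hcC : ∑ i ∈ Finset.Icc 1 n, 1 / (b - (i : ℝ)) = c - 1 / b := by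
    rw [hc, Finset.sum_range_succ', Finset.range_eq_Ico,
      Finset.sum_Ico_add' (fun i : ℕ => 1 / (b - (i : ℝ))) 0 n 1, Nat.cast_zero, sub_zero,
      add_sub_cancel_right, zero_add]
    rfl
  rw [hcC]
  set k : ℝ → ℝ := fun t => t ^ (-(b + 1)) * (c - Real.log t) with hk
  have hkm : Measurable k := by fun_prop
  set v : ℝ → ℝ := fun t => μ.real {x | G x < t} with hv
  set H : X × ℝ → ℝ := {p : X × ℝ | G p.1 < p.2}.indicator (fun p => k p.2) with hH
  have hHm : Measurable H :=
    (hkm.comp measurable_snd).indicator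
      (measurableSet_lt (hG.comp measurable_fst) measurable_snd)
  have hGt : ∀ t, MeasurableSet {x | G x < t} := fun t => measurableSet_lt hG measurable_const
  have hHt : ∀ t, (fun x => H (x, t)) = {x | G x < t}.indicator (fun _ => k t) := by
    intro t; ext x; simp [hH, indicator]
  have hvm : ∀ t₁ t₂, 1 < t₂ → t₁ ≤ t₂ → v t₁ ≤ v t₂ := fun t₁ t₂ h2 h =>
    measureReal_mono (fun x hx => lt_of_lt_of_le hx h) (hfin t₂ h2).ne
  have hv0 : ∀ t, 0 ≤ v t := fun t => measureReal_nonneg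
  have hvmeas : AEStronglyMeasurable v (volume.restrict (Ioi 1)) := by
    refine AEMeasurable.aestronglyMeasurable ?_
    refine aemeasurable_restrict_of_monotoneOn measurableSet_Ioi ?_
    intro t₁ _ t₂ h2 h
    exact hvm t₁ t₂ h2 h
  -- the scaling hypothesis at `t₁ = 2` gives polynomial growth of `v`
  have hvb : ∀ t, 1 < t → v t ≤ v 2 * (1 + (t - 1) ^ n) := by
    intro t ht
    have hp : 0 ≤ (t - 1) ^ n := pow_nonneg (by linarith) n
    rcases le_total t 2 with h | h
    · nlinarith [hvm t 2 (by norm_num) h, hv0 2, mul_nonneg (hv0 2) hp]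
    · have := hscale 2 t (by norm_num) h
      norm_num at this
      change v t ≤ v 2 * (t - 1) ^ n at this
      nlinarith [hv0 2]
  have hk0 : IntegrableOn k (Ioi 1) := by
    have := weight_integrableOn 0 b c (by simpa using hb0)
    simpa only [pow_zero, one_mul] using this
  have hkn : IntegrableOn (fun t => (t - 1) ^ n * k t) (Ioi 1) := by
    simpa [hk, mul_assoc] using weight_integrableOn n b c hb
  have hvk : IntegrableOn (fun t => v t * k t) (Ioi 1) := by
    refine Integrable.mono' ((hk0.norm.add hkn.norm).const_mul (v 2))
      (hvmeas.mul hkm.aestronglyMeasurable) ?_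
    filter_upwards [ae_restrict_mem measurableSet_Ioi] with t ht
    have ht : 1 < t := ht
    simp only [Pi.add_apply]
    rw [norm_mul (v t), norm_mul (_ ^ n), Real.norm_of_nonneg (hv0 t),
      Real.norm_of_nonneg (pow_nonneg (by linarith : 0 ≤ t - 1) n)]
    calc v t * ‖k t‖ ≤ v 2 * (1 + (t - 1) ^ n) * ‖k t‖ := by gcongr; exact hvb t ht
      _ = _ := by ring
  have hHint : Integrable H (μ.prod (volume.restrict (Ioi 1))) := by
    rw [integrable_prod_iff' hHm.aestronglyMeasurable]
    constructor
    · filter_upwards [ae_restrict_mem measurableSet_Ioi] with t ht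
      rw [hHt, integrable_indicator_iff (hGt t)]
      exact integrableOn_const (hfin t ht).ne
    · refine hvk.norm.congr ?_
      filter_upwards with t
      have : (fun x => ‖H (x, t)‖) = {x | G x < t}.indicator (fun _ => ‖k t‖) := by
        ext x; simp [hH, indicator]; split_ifs <;> simp
      rw [this, integral_indicator (hGt t), setIntegral_const, norm_mul,
        Real.norm_of_nonneg (hv0 t), smul_eq_mul]
  have hx : ∀ᵐ x ∂μ, ∫ t in Ioi (1 : ℝ), H (x, t) =
      b⁻¹ * (G x ^ (-b) * (c - 1 / b - Real.log (G x))) := by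
    filter_upwards [hG1] with x hx
    have : (fun t => H (x, t)) = (Ioi (G x)).indicator k := by
      ext t; simp [hH, indicator]
    rw [this, setIntegral_indicator measurableSet_Ioi, inter_eq_self_of_subset_right
      (Ioi_subset_Ioi hx), hk, integral_Ioi_rpow_log b c _ hb0 hx]
    ring
  have ht : ∫ x, (∫ t in Ioi (1 : ℝ), H (x, t)) ∂μ = ∫ t in Ioi (1 : ℝ), v t * k t := by
    rw [integral_integral_swap (f := fun x t => H (x, t)) hHint]
    congr 1; ext t
    rw [hHt, integral_indicator (hGt t), setIntegral_const, smul_eq_mul]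
  have hI := (hHint.integral_prod_left.congr hx).const_mul b
  have hI' : Integrable (fun x => G x ^ (-b) * (c - 1 / b - Real.log (G x))) μ := by
    refine hI.congr (Eventually.of_forall fun x => ?_)
    simp only
    rw [← mul_assoc, mul_inv_cancel₀ hb0.ne', one_mul]
  refine ⟨hI', ?_⟩
  rw [integral_congr_ae hx, integral_const_mul] at ht
  suffices 0 ≤ ∫ t in Ioi (1 : ℝ), v t * k t by
    rw [← ht] at this
    exact nonneg_of_mul_nonneg_right this (inv_pos.2 hb0)
  -- Chebyshev: compare with the constant ratio `w = v τ / (τ - 1) ^ n`, where `log τ = c`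
  have hcpos : 0 < c := by
    refine Finset.sum_pos (fun i hi => ?_) (by simp)
    have : (i : ℝ) ≤ n := by exact_mod_cast Nat.lt_succ_iff.1 (Finset.mem_range.1 hi)
    have : 0 < b - i := by linarith
    positivity
  have hτ : 1 < Real.exp c := Real.one_lt_exp_iff.2 hcpos
  set w := v (Real.exp c) / (Real.exp c - 1) ^ n with hw
  have hτn : 0 < (Real.exp c - 1) ^ n := pow_pos (by linarith) n
  have hzero : ∫ t in Ioi (1 : ℝ), w * ((t - 1) ^ n * k t) = 0 := by
    rw [integral_const_mul]
    have := weight_integral_eq_zero n b hb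
    rw [← hc] at this
    simp only [hk, ← mul_assoc, this, mul_zero]
  rw [← hzero]
  refine setIntegral_mono_on (hkn.const_mul w) hvk measurableSet_Ioi fun t ht => ?_
  have ht : 1 < t := ht
  have hr : 0 ≤ t ^ (-(b + 1)) := Real.rpow_nonneg (by linarith) _
  rw [← mul_assoc]
  rcases le_total t (Real.exp c) with h | h
  · have h1 : w * (t - 1) ^ n ≤ v t := by
      rw [hw, div_mul_eq_mul_div, div_le_iff₀ hτn]
      exact hscale t _ ht h
    have h2 : 0 ≤ k t := mul_nonneg hr (sub_nonneg.2 ((Real.log_le_iff_le_exp (by linarith)).2 h))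
    exact mul_le_mul_of_nonneg_right h1 h2
  · have h1 : v t ≤ w * (t - 1) ^ n := by
      rw [hw, div_mul_eq_mul_div, le_div_iff₀ hτn]
      exact hscale _ t hτ h
    have h2 : k t ≤ 0 := mul_nonpos_of_nonneg_of_nonpos hr
      (sub_nonpos.2 ((Real.le_log_iff_exp_le (by linarith)).2 h))
    exact mul_le_mul_of_nonpos_right h1 h2

/-! ### Sublevel sets of the convex function -/

/-- With `f = g ^ (-β)` and `m = inf g = fmax ^ (-1/β)`, the set `{f > fmax * t ^ (-β)}` is
`{g < m * t}`, and its volume divided by `(t - 1) ^ n` is nonincreasing. The infimum of `g` need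
not be attained, so the homothety is centred at a point with `g < m * a`, and then `a → 1⁺`. -/
theorem superlevel_scaling (n : ℕ) (β : ℝ) (hβ : 0 < β) (f : (Fin n → ℝ) → ℝ) (fmax : ℝ)
    (hint : Integrable f) (hf : IsBetaConcave n β f) (hfmax : IsLUB (range f) fmax)
    (hpos : 0 < fmax) (t₁ t₂ : ℝ) (h1 : 1 < t₁) (h12 : t₁ ≤ t₂) :
    volume.real {x | fmax * t₂ ^ (-β) < f x} * (t₁ - 1) ^ n ≤
      volume.real {x | fmax * t₁ ^ (-β) < f x} * (t₂ - 1) ^ n := by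
  obtain ⟨s, g, hg, hs, hns⟩ := hf
  set m := fmax ^ (-β⁻¹) with hm
  have hm0 : 0 < m := Real.rpow_pos_of_pos hpos _
  have hmf : m ^ (-β) = fmax := by
    rw [hm, ← Real.rpow_mul hpos.le]
    simp [hβ.ne']
  have hset : ∀ t, 0 < t → ∀ x, fmax * t ^ (-β) < f x ↔ x ∈ s ∧ g x < m * t := by
    intro t ht x
    rw [← hmf, ← Real.mul_rpow hm0.le ht.le]
    by_cases hx : x ∈ s
    · rw [(hs x hx).2, Real.rpow_lt_rpow_iff_of_neg (by positivity) (hs x hx).1 (by linarith)]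
      simp [hx]
    · rw [hns x hx]
      simp only [hx, false_and, iff_false, not_lt]
      positivity
  -- homothety about a point `x₀` where `g x₀ < m * a`
  have hstep : ∀ a ∈ Ioo 1 t₁, volume.real {x | fmax * t₂ ^ (-β) < f x} * (t₁ - a) ^ n ≤
      volume.real {x | fmax * t₁ ^ (-β) < f x} * (t₂ - a) ^ n := by
    rintro a ⟨ha1, hat⟩
    have hlt : fmax * a ^ (-β) < fmax :=
      mul_lt_of_lt_one_right hpos (Real.rpow_lt_one_of_one_lt_of_neg ha1 (by linarith))
    obtain ⟨_, ⟨x₀, rfl⟩, hx₀, -⟩ := hfmax.exists_between hlt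
    obtain ⟨hx₀s, hx₀g⟩ := (hset a (by linarith) x₀).1 hx₀
    set l := (t₁ - a) / (t₂ - a) with hl
    have h2a : 0 < t₂ - a := by linarith
    have hl0 : 0 < l := div_pos (by linarith) h2a
    have hl1 : l ≤ 1 := (div_le_one h2a).2 (by linarith)
    have hlt : l * (t₂ - a) = t₁ - a := div_mul_cancel₀ _ h2a.ne'
    have hsub : AffineMap.homothety x₀ l '' {x | fmax * t₂ ^ (-β) < f x} ⊆
        {x | fmax * t₁ ^ (-β) < f x} := by
      rintro _ ⟨x, hx, rfl⟩
      obtain ⟨hxs, hxg⟩ := (hset t₂ (by linarith) x).1 hx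
      refine (hset t₁ (by linarith) _).2 ?_
      have he : AffineMap.homothety x₀ l x = (1 - l) • x₀ + l • x := by
        simp only [AffineMap.homothety_apply, vsub_eq_sub, vadd_eq_add]
        module
      rw [he]
      refine ⟨hg.1 hx₀s hxs (by linarith) hl0.le (by ring), ?_⟩
      have hc := hg.2 hx₀s hxs (by linarith : 0 ≤ 1 - l) hl0.le (by ring)
      simp only [smul_eq_mul] at hc
      calc g ((1 - l) • x₀ + l • x) ≤ (1 - l) * g x₀ + l * g x := hc
        _ < (1 - l) * (m * a) + l * (m * t₂) := by
            have := mul_lt_mul_of_pos_left hxg hl0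
            have := mul_le_mul_of_nonneg_left hx₀g.le (by linarith : 0 ≤ 1 - l)
            linarith
        _ = m * (a + l * (t₂ - a)) := by ring
        _ = m * t₁ := by rw [hlt]; ring
    have hfin : volume {x | fmax * t₁ ^ (-β) < f x} ≠ ⊤ :=
      (hint.measure_gt_lt_top (mul_pos hpos (Real.rpow_pos_of_pos (by linarith) _))).ne
    have hvol := measureReal_mono hsub hfin
    rw [measureReal_def, Measure.addHaar_image_homothety, ENNReal.toReal_mul,
      ENNReal.toReal_ofReal (abs_nonneg _), ← measureReal_def, Module.finrank_fin_fun,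
      abs_of_nonneg (by positivity)] at hvol
    rw [← hlt, mul_pow, ← mul_assoc, mul_comm (volume.real _)]
    gcongr
  refine le_of_tendsto_of_tendsto (b := 𝓝[>] 1)
    (f := fun a => volume.real {x | fmax * t₂ ^ (-β) < f x} * (t₁ - a) ^ n)
    (g := fun a => volume.real {x | fmax * t₁ ^ (-β) < f x} * (t₂ - a) ^ n) ?_ ?_ ?_
  · exact (Continuous.tendsto (by fun_prop) 1).mono_left nhdsWithin_le_nhds
  · exact (Continuous.tendsto (by fun_prop) 1).mono_left nhdsWithin_le_nhds
  · filter_upwards [Ioo_mem_nhdsGT h1] with a ha using hstep a ha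

/-! ### The entropy bounds -/

/-- For any real `β > n` and any β-concave probability density `f` on `ℝ^n` with finite
sup-norm `f_max`, its differential entropy `h(f) = ∫ -f log f` satisfies
`log(1/f_max) ≤ h(f) ≤ log(1/f_max) + ∑_{i=1}^n β/(β-i)`. -/
theorem entropy_betaconcave_bounds
    (n : ℕ) (β : ℝ) (hβ : (n : ℝ) < β)
    (f : (Fin n → ℝ) → ℝ) (fmax : ℝ)
    (hf_prob : (∫ x, f x) = 1)
    (hf : IsBetaConcave n β f)
    (hfmax : IsLUB (Set.range f) fmax) :
    Real.log (1 / fmax) ≤ (∫ x, -(f x * Real.log (f x))) ∧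
      (∫ x, -(f x * Real.log (f x))) ≤
        Real.log (1 / fmax) + ∑ i ∈ Finset.Icc 1 n, β / (β - (i : ℝ)) := by
  have hβ0 : 0 < β := lt_of_le_of_lt n.cast_nonneg hβ
  have hint : Integrable f := by
    by_contra h
    rw [integral_undef h] at hf_prob
    exact zero_ne_one hf_prob
  have hle : ∀ x, f x ≤ fmax := fun x => hfmax.1 ⟨x, rfl⟩
  have hpos : 0 < fmax := by
    by_contra h
    have := integral_nonpos (μ := volume) fun x => (hle x).trans (not_lt.1 h)
    linarith
  have hf0 : ∀ x, 0 ≤ f x := by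
    obtain ⟨s, g, -, hs, hns⟩ := hf
    intro x
    by_cases hx : x ∈ s
    · rw [(hs x hx).2]; exact Real.rpow_nonneg (hs x hx).1.le _
    · exact (hns x hx).ge
  -- a measurable representative of `f`, so that Fubini applies to the sublevel sets of `G`
  set F := hint.aestronglyMeasurable.mk f with hF
  have hFm : Measurable F := hint.aestronglyMeasurable.stronglyMeasurable_mk.measurable
  have hFf : f =ᵐ[volume] F := hint.aestronglyMeasurable.ae_eq_mk
  have hFpos : MeasurableSet {x | 0 < F x} := measurableSet_lt measurable_const hFm
  set G : (Fin n → ℝ) → ℝ := fun x => (F x / fmax) ^ (-β⁻¹) with hG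
  have hGm : Measurable G := by fun_prop
  have hGlevel : ∀ t, 1 < t → (volume.restrict {x | 0 < F x}) {x | G x < t} =
      volume {x | fmax * t ^ (-β) < f x} := by
    intro t ht
    have ht0 : 0 < t := by linarith
    rw [Measure.restrict_apply (measurableSet_lt hGm measurable_const)]
    refine measure_congr ?_
    filter_upwards [hFf] with x hx
    refine propext ?_
    change (G x < t ∧ 0 < F x) ↔ fmax * t ^ (-β) < f x
    rw [hx]
    have htp : 0 < t ^ (-β) := Real.rpow_pos_of_pos ht0 _
    have hte : t = (t ^ (-β)) ^ (-β⁻¹) := by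
      rw [← Real.rpow_mul ht0.le]
      simp [hβ0.ne']
    have key : 0 < F x → (G x < t ↔ fmax * t ^ (-β) < F x) := by
      intro h
      rw [hG]
      conv_lhs => rw [hte]
      rw [Real.rpow_lt_rpow_iff_of_neg (div_pos h hpos) htp (by simpa using hβ0),
        lt_div_iff₀ hpos, mul_comm]
    constructor
    · rintro ⟨h1, h2⟩
      exact (key h2).1 h1
    · intro h
      have h2 : 0 < F x := (mul_pos hpos htp).trans h
      exact ⟨(key h2).2 h, h2⟩
  obtain ⟨hI, hI0⟩ := entropy_core (volume.restrict {x | 0 < F x}) n β hβ G hGm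
    (by
      filter_upwards [ae_restrict_mem hFpos, ae_restrict_of_ae hFf] with x hx hxf
      have hx : 0 < F x := hx
      refine Real.one_le_rpow_of_pos_of_le_one_of_nonpos (div_pos hx hpos) ?_ (by simpa using hβ0.le)
      rw [div_le_one hpos, ← hxf]
      exact hle x)
    (fun t ht => by
      rw [hGlevel t ht]
      exact hint.measure_gt_lt_top (mul_pos hpos (Real.rpow_pos_of_pos (by linarith) _)))
    (fun t₁ t₂ h1 h12 => by
      simp only [measureReal_def, hGlevel t₁ h1, hGlevel t₂ (h1.trans_le h12)]
      exact superlevel_scaling n β hβ0 f fmax hint hf hfmax hpos t₁ t₂ h1 h12)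
  set C := ∑ i ∈ Finset.Icc 1 n, 1 / (β - (i : ℝ)) with hC
  -- `ψ` is the integrand of `entropy_core` written in terms of `f`; where `f x = 0` it vanishes
  set ψ : (Fin n → ℝ) → ℝ :=
    fun x => f x / fmax * (C + β⁻¹ * (Real.log (f x) - Real.log fmax)) with hψ
  have hψeq : {x | 0 < F x}.indicator (fun x => G x ^ (-β) * (C - Real.log (G x))) =ᵐ[volume] ψ := by
    filter_upwards [hFf] with x hx
    rw [hψ]
    by_cases h : 0 < F x
    · rw [indicator_of_mem (show x ∈ {x | 0 < F x} from h)]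
      have hq : 0 < F x / fmax := div_pos h hpos
      simp only [hG]
      rw [Real.log_rpow hq, ← Real.rpow_mul hq.le, Real.log_div h.ne' hpos.ne', hx, neg_mul_neg,
        inv_mul_cancel₀ hβ0.ne', Real.rpow_one]
      ring
    · rw [indicator_of_notMem (show x ∉ {x | 0 < F x} from h)]
      have : f x = 0 := le_antisymm (by rw [hx]; exact not_lt.1 h) (hf0 x)
      simp [this]
  have hψI : Integrable ψ := (integrable_indicator_iff hFpos |>.2 hI).congr hψeq
  have hψ0 : 0 ≤ ∫ x, ψ x := by
    rw [← integral_congr_ae hψeq, integral_indicator hFpos]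
    exact hI0
  have hent : (fun x => -(f x * Real.log (f x))) =
      fun x => (β * C - Real.log fmax) * f x - β * fmax * ψ x := by
    ext x
    simp only [hψ]
    field_simp
    ring
  have hentI : Integrable fun x => -(f x * Real.log (f x)) := by
    rw [hent]
    exact (hint.const_mul _).sub (hψI.const_mul _)
  have hlog : Real.log (1 / fmax) = -Real.log fmax := by simp
  constructor
  · calc Real.log (1 / fmax) = ∫ x, -Real.log fmax * f x := by
          rw [integral_const_mul, hf_prob, hlog, mul_one]
      _ ≤ _ := by
        refine integral_mono (hint.const_mul _) hentI fun x => ?_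
        rcases (hf0 x).eq_or_lt with h | h
        · simp [← h]
        · have := mul_le_mul_of_nonneg_left (Real.log_le_log h (hle x)) h.le
          simp only
          linarith
  · rw [hent, integral_sub (hint.const_mul _) (hψI.const_mul _), integral_const_mul,
      integral_const_mul, hf_prob, hlog]
    have hs : ∑ i ∈ Finset.Icc 1 n, β / (β - (i : ℝ)) = β * C := by
      rw [hC, Finset.mul_sum]
      exact Finset.sum_congr rfl fun i _ => by ring
    have := mul_nonneg (mul_pos hβ0 hpos).le hψ0
    rw [hs]
    linarith
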